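/- Let I ⊆ k[x_1,...,x_n] be an ideal over an algebraically closed field k, and let V = Z(I) be its zero set. Then V has dimension r if and only if: (a) there exists a subset U ⊆ {1,...,n} of size r such that the elimination ideal I ∩ k[x_i : i ∈ U] is the zero ideal, and (b) for every subset U' ⊆ {1,...,n} of size r+1, the elimination ideal I ∩ k[x_i : i ∈ U'] is nonzero. -/

import Mathlib

/-!
For an affine domain, Noether normalization identifies the Krull dimension with the transcendence
degree. Let `A` be any algebra of finite type over a field, generated by a family `x`. A chain of
`r` strict inclusions of primes starts at some prime `P` with `r ≤ dim A ⧸ P`, and `x` contains a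
transcendence basis of the domain `A ⧸ P`, whose members are already algebraically independent
in `A`. Conversely, an algebraically independent family in `A` remains so modulo some prime `P`:
take `P` disjoint from the nonzero polynomials in the family. So `dim A` is the largest number of
algebraically independent members of `x`. For `A = k[x] ⧸ I`, independence of `x_i`, `i ∈ U`,
means that the elimination ideal of `U` vanishes.
-/

open MvPolynomial Algebra

section KrullDimension

theorem ringKrullDim_le_of_isIntegral (R S : Type*) [CommRing R] [CommRing S] [Algebra R S]
    [Algebra.IsIntegral R S] : ringKrullDim S ≤ ringKrullDim R :=
  Order.krullDim_le_of_strictMono (PrimeSpectrum.comap (algebraMap R S)) fun p q hpq ↦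
    Ideal.IsIntegral.comap_lt_comap (I := p.asIdeal) (J := q.asIdeal) hpq

theorem ringKrullDim_eq_of_isIntegral (R S : Type*) [CommRing R] [CommRing S] [Algebra R S]
    [Algebra.IsIntegral R S] [FaithfulSMul R S] : ringKrullDim S = ringKrullDim R := by
  refine (ringKrullDim_le_of_isIntegral R S).antisymm (iSup_le fun l ↦ ?_)
  obtain ⟨Q, _, _⟩ := (inferInstance : Nonempty (l.head.asIdeal.primesOver S))
  obtain ⟨L, hL, -⟩ := Ideal.exists_ltSeries_of_hasGoingUp l Q
  exact hL ▸ Order.LTSeries.length_le_krullDim L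

variable {R : Type*} [CommRing R]

theorem ringKrullDim_quotient_radical (I : Ideal R) :
    ringKrullDim (R ⧸ I.radical) = ringKrullDim (R ⧸ I) := by
  rw [ringKrullDim_quotient, ringKrullDim_quotient, PrimeSpectrum.zeroLocus_radical]

theorem ringKrullDim_quotient_asIdeal (p : PrimeSpectrum R) :
    ringKrullDim (R ⧸ p.asIdeal) = Order.coheight p := by
  rw [ringKrullDim_quotient, Order.coheight_eq_krullDim_Ici]
  rfl

theorem exists_isPrime_natCast_le_ringKrullDim_quotient {r : ℕ}
    (hr : (r : WithBot ℕ∞) ≤ ringKrullDim R) :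
    ∃ P : Ideal R, P.IsPrime ∧ (r : WithBot ℕ∞) ≤ ringKrullDim (R ⧸ P) := by
  obtain ⟨l, rfl⟩ := Order.le_krullDim_iff.mp hr
  refine ⟨l.head.asIdeal, l.head.isPrime, ?_⟩
  rw [ringKrullDim_quotient_asIdeal]
  exact_mod_cast Order.length_le_coheight_head

end KrullDimension

theorem adjoin_range_comp_eq_top {R A B ι : Type*} [CommSemiring R] [Semiring A] [Semiring B]
    [Algebra R A] [Algebra R B] {f : A →ₐ[R] B} (hf : Function.Surjective f) {x : ι → A}
    (hx : adjoin R (Set.range x) = ⊤) : adjoin R (Set.range (f ∘ x)) = ⊤ := by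
  rw [Set.range_comp, ← AlgHom.map_adjoin, hx, Algebra.map_top, AlgHom.range_eq_top]
  exact hf

section AlgebraicIndependence

variable {R A ι : Type*} [CommRing R] [CommRing A] [Algebra R A]

theorem exists_isTranscendenceBasis_comp_val [NoZeroDivisors A] [FaithfulSMul R A] (x : ι → A)
    [Algebra.IsAlgebraic (adjoin R (Set.range x)) A] :
    ∃ U : Set ι, IsTranscendenceBasis R fun i : U ↦ x i := by
  obtain ⟨t, htx, ht⟩ := exists_isTranscendenceBasis_subset (R := R) (Set.range x)
  obtain ⟨U, rfl, hU⟩ := Set.exists_image_eq_injOn_of_subset_range htx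
  exact ⟨U, (isTranscendenceBasis_image hU).2 ht⟩

theorem exists_isPrime_algebraicIndependent_quotient_mk [IsDomain R] {y : ι → A}
    (hy : AlgebraicIndependent R y) :
    ∃ P : Ideal A, P.IsPrime ∧ AlgebraicIndependent R (Ideal.Quotient.mkₐ R P ∘ y) := by
  let S : Submonoid A := (nonZeroDivisors (MvPolynomial ι R)).map (aeval y)
  have hS : Disjoint ((⊥ : Ideal A) : Set A) S := by
    rw [Set.disjoint_left]
    rintro _ h0 ⟨p, hp, rfl⟩
    exact nonZeroDivisors.ne_zero hp ((algebraicIndependent_iff.1 hy) p h0)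
  obtain ⟨P, hP, -, hPS⟩ := Ideal.exists_le_prime_disjoint ⊥ S hS
  refine ⟨P, hP, algebraicIndependent_iff.2 fun p hp ↦ ?_⟩
  have hpP : aeval y p ∈ P := by
    rw [← Ideal.Quotient.eq_zero_iff_mem, ← hp]
    exact comp_aeval_apply y (Ideal.Quotient.mkₐ R P) p
  by_contra hp0
  exact Set.disjoint_left.1 hPS hpP ⟨p, mem_nonZeroDivisors_of_ne_zero hp0, rfl⟩

theorem algebraicIndepOn_quotient_mk_X_iff (I : Ideal (MvPolynomial ι R)) (U : Set ι) :
    AlgebraicIndepOn R (fun i ↦ Ideal.Quotient.mk I (X i)) U ↔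
      ∀ f ∈ I, (f.vars : Set ι) ⊆ U → f = 0 := by
  have haeval (f : MvPolynomial ι R) :
      aeval (fun i ↦ Ideal.Quotient.mk I (X i)) f = Ideal.Quotient.mk I f :=
    (DFunLike.congr_fun (aeval_unique (Ideal.Quotient.mkₐ R I)) f).symm
  have hindep := algebraicIndependent_comp_subtype (R := R)
    (x := fun i ↦ Ideal.Quotient.mk I (X i)) (s := U)
  simp only [haeval, mem_supported, Ideal.Quotient.eq_zero_iff_mem] at hindep
  exact hindep.trans (forall_congr' fun f ↦ forall_comm)

end AlgebraicIndependence

section FiniteType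

variable {k A : Type*} [Field k] [CommRing A] [Algebra k A]

theorem ringKrullDim_eq_toENat_trdeg (k A : Type*) [Field k] [CommRing A] [IsDomain A]
    [Algebra k A] [Algebra.FiniteType k A] :
    ringKrullDim A = (Cardinal.toENat (trdeg k A) : WithBot ℕ∞) := by
  obtain ⟨s, g, hg, hint⟩ := exists_integral_inj_algHom_of_fg k A
  let := g.toAlgebra
  have : Algebra.IsIntegral (MvPolynomial (Fin s) k) A := ⟨hint⟩
  have : FaithfulSMul (MvPolynomial (Fin s) k) A := (faithfulSMul_iff_algebraMap_injective _ _).2 hg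
  have : IsScalarTower k (MvPolynomial (Fin s) k) A :=
    .of_algebraMap_eq fun c ↦ (g.commutes c).symm
  have htrdeg := lift_trdeg_add_eq k (MvPolynomial (Fin s) k) A
  rw [trdeg_eq_zero (R := MvPolynomial (Fin s) k), trdeg_of_isDomain] at htrdeg
  rw [ringKrullDim_eq_of_isIntegral (MvPolynomial (Fin s) k) A,
    MvPolynomial.ringKrullDim_of_isNoetherianRing, ← Cardinal.toENat_lift (c := trdeg k A),
    ← htrdeg]
  simp

variable [Algebra.FiniteType k A]

theorem enatCard_le_ringKrullDim_of_algebraicIndependent {ι : Type*} {y : ι → A}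
    (hy : AlgebraicIndependent k y) : (ENat.card ι : WithBot ℕ∞) ≤ ringKrullDim A := by
  obtain ⟨P, _, hyP⟩ := exists_isPrime_algebraicIndependent_quotient_mk hy
  have hcard : ENat.card ι ≤ Cardinal.toENat (trdeg k (A ⧸ P)) := by
    simpa [ENat.card] using Cardinal.toENat.monotone' hyP.lift_cardinalMk_le_trdeg
  calc (ENat.card ι : WithBot ℕ∞)
    _ ≤ (Cardinal.toENat (trdeg k (A ⧸ P)) : WithBot ℕ∞) := by exact_mod_cast hcard
    _ = ringKrullDim (A ⧸ P) := (ringKrullDim_eq_toENat_trdeg k (A ⧸ P)).symm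
    _ ≤ ringKrullDim A := ringKrullDim_quotient_le P

variable {σ : Type*} {x : σ → A}

theorem exists_algebraicIndepOn_encard_eq_ringKrullDim [IsDomain A]
    (hx : adjoin k (Set.range x) = ⊤) :
    ∃ U : Set σ, AlgebraicIndepOn k x U ∧ (U.encard : WithBot ℕ∞) = ringKrullDim A := by
  have : Algebra.IsAlgebraic (adjoin k (Set.range x)) A :=
    ⟨fun a ↦ isAlgebraic_algebraMap (⟨a, hx ▸ mem_top⟩ : adjoin k (Set.range x))⟩
  obtain ⟨U, hU⟩ := exists_isTranscendenceBasis_comp_val (R := k) x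
  refine ⟨U, hU.1, ?_⟩
  rw [ringKrullDim_eq_toENat_trdeg k A, ← Cardinal.toENat_lift, ← hU.lift_cardinalMk_eq_trdeg,
    Cardinal.toENat_lift]
  rfl

theorem exists_algebraicIndepOn_card_eq_of_le_ringKrullDim (hx : adjoin k (Set.range x) = ⊤)
    {r : ℕ} (hr : (r : WithBot ℕ∞) ≤ ringKrullDim A) :
    ∃ U : Finset σ, U.card = r ∧ AlgebraicIndepOn k x U := by
  obtain ⟨P, _, hrP⟩ := exists_isPrime_natCast_le_ringKrullDim_quotient hr
  let π : A →ₐ[k] A ⧸ P := Ideal.Quotient.mkₐ k P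
  have hπx : adjoin k (Set.range (π ∘ x)) = ⊤ :=
    adjoin_range_comp_eq_top (Ideal.Quotient.mkₐ_surjective k P) hx
  obtain ⟨B, hB, hBcard⟩ := exists_algebraicIndepOn_encard_eq_ringKrullDim hπx
  have hrB : (r : ℕ∞) ≤ B.encard := by
    rw [← hBcard] at hrP
    exact_mod_cast hrP
  obtain ⟨U, hUB, hU⟩ := Set.exists_subset_encard_eq hrB
  lift U to Finset σ using Set.finite_of_encard_eq_coe hU
  exact ⟨U, by simpa using hU, .of_comp π (hB.mono hUB)⟩

theorem natCast_le_ringKrullDim_iff_exists_algebraicIndepOn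
    (hx : adjoin k (Set.range x) = ⊤) (r : ℕ) :
    (r : WithBot ℕ∞) ≤ ringKrullDim A ↔
      ∃ U : Finset σ, U.card = r ∧ AlgebraicIndepOn k x U := by
  refine ⟨exists_algebraicIndepOn_card_eq_of_le_ringKrullDim hx, ?_⟩
  rintro ⟨U, rfl, hU⟩
  simpa using enatCard_le_ringKrullDim_of_algebraicIndependent hU

end FiniteType

theorem natCast_le_ringKrullDim_quotient_iff_exists_elimination_eq_bot {k σ : Type*} [Field k]
    (I : Ideal (MvPolynomial σ k)) [Algebra.FiniteType k (MvPolynomial σ k ⧸ I)] (r : ℕ) :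
    (r : WithBot ℕ∞) ≤ ringKrullDim (MvPolynomial σ k ⧸ I) ↔
      ∃ U : Finset σ, U.card = r ∧ ∀ f ∈ I, (f.vars : Set σ) ⊆ (U : Set σ) → f = 0 := by
  have hX : adjoin k (Set.range fun i ↦ Ideal.Quotient.mk I (X i)) = ⊤ :=
    adjoin_range_comp_eq_top (Ideal.Quotient.mkₐ_surjective k I) adjoin_range_X
  simp only [natCast_le_ringKrullDim_iff_exists_algebraicIndepOn hX,
    algebraicIndepOn_quotient_mk_X_iff]

theorem dim_iff_elimination_general {k σ : Type*} [Field k] (I : Ideal (MvPolynomial σ k))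
    [Algebra.FiniteType k (MvPolynomial σ k ⧸ I)] (r : ℕ) :
    ringKrullDim (MvPolynomial σ k ⧸ I) = (r : WithBot ℕ∞) ↔
      ((∃ U : Finset σ, U.card = r ∧
          ∀ f ∈ I, (f.vars : Set σ) ⊆ (U : Set σ) → f = 0) ∧
        (∀ U' : Finset σ, U'.card = r + 1 →
          ∃ f ∈ I, (f.vars : Set σ) ⊆ (U' : Set σ) ∧ f ≠ 0)) := by
  have hle := natCast_le_ringKrullDim_quotient_iff_exists_elimination_eq_bot I
  have hsucc : ringKrullDim (MvPolynomial σ k ⧸ I) ≤ r ↔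
      ¬ ((r + 1 : ℕ) : WithBot ℕ∞) ≤ ringKrullDim (MvPolynomial σ k ⧸ I) := by
    rw [not_le, Nat.cast_add_one, ENat.WithBot.lt_add_one_iff]
  rw [le_antisymm_iff, hsucc, and_comm, hle, hle]
  push Not
  rfl

/-- Characterisation of the dimension of a zero set via elimination ideals: over an
algebraically closed field `k`, the zero set of an ideal `I ⊆ k[x_1, …, x_n]` has
dimension `r` (i.e. the Krull dimension of `k[x]/√I` is `r`) if and only if (a) there is
a set `U` of `r` variables such that the elimination ideal `I ∩ k[x_i : i ∈ U]` is zero,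
and (b) for every set `U'` of `r + 1` variables the elimination ideal
`I ∩ k[x_i : i ∈ U']` is nonzero. -/
theorem dim_iff_elimination {k : Type*} [Field k] [IsAlgClosed k] {n : ℕ}
    (I : Ideal (MvPolynomial (Fin n) k)) (r : ℕ) :
    ringKrullDim (MvPolynomial (Fin n) k ⧸ I.radical) = (r : WithBot (WithTop ℕ)) ↔
      ((∃ U : Finset (Fin n), U.card = r ∧
          ∀ f ∈ I, (f.vars : Set (Fin n)) ⊆ (U : Set (Fin n)) → f = 0) ∧
        (∀ U' : Finset (Fin n), U'.card = r + 1 →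
          ∃ f ∈ I, (f.vars : Set (Fin n)) ⊆ (U' : Set (Fin n)) ∧ f ≠ 0)) := by
  rw [ringKrullDim_quotient_radical]
  exact dim_iff_elimination_general I r
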